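/- Assume the sequences are completely asynchronous, i.e., t¹_i ≠ t²_j for all i, j, and satisfy the boundary overlap conditions max(t¹_0, t²_0) < min(t¹_1, t²_1) and max(t¹_{M₁−1}, t²_{M₂−1}) < min(t¹_{M₁}, t²_{M₂}). Then for every j with 1 < j < M₂ − 1, the point t²_j is nonextant if and only if no point of the first sequence lies in the open interval (t²_{j−1}, t²_{j+1}), i.e., t¹_k ∉ Set.Ioo t²_{j−1} t²_{j+1} for all 0 ≤ k ≤ M₁. Equivalently, in the merged sorted sequence of all observation times, t²_j is nonextant exactly when both its immediate predecessor and immediate successor belong to the second sequence. -/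

import Mathlib

open Classical in
/-- Indicator `χ(i,j)` of the event that the observation intervals
`(t¹_{i-1}, t¹_i]` and `(t²_{j-1}, t²_j]` overlap. -/
noncomputable def chi (t₁ t₂ : ℕ → ℝ) (i j : ℕ) : ℝ :=
  if (Set.Ioc (t₁ (i - 1)) (t₁ i) ∩ Set.Ioc (t₂ (j - 1)) (t₂ j)).Nonempty then 1 else 0

/-- The Hayashi–Yoshida double sum for price functions `P₁, P₂` and observation
times `t₁ 0 < ⋯ < t₁ M₁` and `t₂ 0 < ⋯ < t₂ M₂`. -/
noncomputable def HY (M₁ M₂ : ℕ) (t₁ t₂ : ℕ → ℝ) (P₁ P₂ : ℝ → ℝ) : ℝ :=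
  ∑ i ∈ Finset.Icc 1 M₁, ∑ j ∈ Finset.Icc 1 M₂,
    (P₁ (t₁ i) - P₁ (t₁ (i - 1))) * (P₂ (t₂ j) - P₂ (t₂ (j - 1))) * chi t₁ t₂ i j

/-- The observation time `t₂ j` is *nonextant* if the Hayashi–Yoshida sum does not
depend on the value of the second price function at `t₂ j`. -/
def Nonextant (M₁ M₂ : ℕ) (t₁ t₂ : ℕ → ℝ) (j : ℕ) : Prop :=
  ∀ P₁ P₂ P₂' : ℝ → ℝ, (∀ x : ℝ, x ≠ t₂ j → P₂' x = P₂ x) →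
    HY M₁ M₂ t₁ t₂ P₁ P₂ = HY M₁ M₂ t₁ t₂ P₁ P₂'

/-- A sequence increasing at each step up to `M` is strictly increasing up to `M`. -/
theorem lt_of_forall_lt_succ {M : ℕ} {t : ℕ → ℝ} (ht : ∀ i < M, t i < t (i + 1))
    {a b : ℕ} (hab : a < b) (hb : b ≤ M) : t a < t b := by
  induction b, hab using Nat.le_induction with
  | base => exact ht a hb
  | succ b _ ih => exact (ih (by omega)).trans (ht b hb)

theorem chi_eq_ite (t₁ t₂ : ℕ → ℝ) (i j : ℕ) :
    chi t₁ t₂ i j =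
      if max (t₁ (i - 1)) (t₂ (j - 1)) < min (t₁ i) (t₂ j) then 1 else 0 := by
  simp only [chi, Set.Ioc_inter_Ioc, Set.nonempty_Ioc]

/-- Changing the second price function at `t₂ j` only affects the terms of the
Hayashi–Yoshida sum in the columns `j` and `j + 1`. -/
theorem HY_sub_HY_of_eq_off {M₁ M₂ : ℕ} {t₁ t₂ : ℕ → ℝ}
    (ht₂ : ∀ j < M₂, t₂ j < t₂ (j + 1)) {j : ℕ} (hj0 : 0 < j) (hjM : j < M₂)
    (P₁ : ℝ → ℝ) {P₂ P₂' : ℝ → ℝ} (hP : ∀ x : ℝ, x ≠ t₂ j → P₂' x = P₂ x) :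
    HY M₁ M₂ t₁ t₂ P₁ P₂ - HY M₁ M₂ t₁ t₂ P₁ P₂' =
      (P₂ (t₂ j) - P₂' (t₂ j)) * ∑ i ∈ Finset.Icc 1 M₁,
        (P₁ (t₁ i) - P₁ (t₁ (i - 1))) * (chi t₁ t₂ i j - chi t₁ t₂ i (j + 1)) := by
  have hoff : ∀ l ≤ M₂, l ≠ j → P₂' (t₂ l) = P₂ (t₂ l) := by
    intro l hl hlj
    apply hP
    rcases lt_or_gt_of_ne hlj with h | h
    · exact (lt_of_forall_lt_succ ht₂ h hjM.le).ne
    · exact (lt_of_forall_lt_succ ht₂ h hl).ne'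
  rw [HY, HY, ← Finset.sum_sub_distrib, Finset.mul_sum]
  refine Finset.sum_congr rfl fun i _ => ?_
  rw [← Finset.sum_sub_distrib, Finset.sum_eq_add j (j + 1) (by omega)]
  · rw [hoff (j - 1) (by omega) (by omega), hoff (j + 1) (by omega) (by omega),
      Nat.add_sub_cancel]
    ring
  · rintro l hl ⟨hlj, hlj'⟩
    rw [Finset.mem_Icc] at hl
    rw [hoff l hl.2 hlj, hoff (l - 1) (by omega) (by omega), sub_self]
  · exact fun h => absurd (Finset.mem_Icc.2 ⟨by omega, by omega⟩) h
  · exact fun h => absurd (Finset.mem_Icc.2 ⟨by omega, by omega⟩) h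

/-- An interior point `t₂ j` is nonextant iff every interval of the first sequence
overlaps both or neither of the two intervals adjacent to `t₂ j`. -/
theorem nonextant_iff_chi_eq {M₁ M₂ : ℕ} {t₁ t₂ : ℕ → ℝ}
    (ht₁ : ∀ i < M₁, t₁ i < t₁ (i + 1)) (ht₂ : ∀ j < M₂, t₂ j < t₂ (j + 1))
    {j : ℕ} (hj0 : 0 < j) (hjM : j < M₂) :
    Nonextant M₁ M₂ t₁ t₂ j ↔
      ∀ i ∈ Finset.Icc 1 M₁, chi t₁ t₂ i j = chi t₁ t₂ i (j + 1) := by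
  constructor
  · intro h i hi
    have hi' := Finset.mem_Icc.1 hi
    have hP : ∀ x : ℝ, x ≠ t₂ j → (0 : ℝ → ℝ) x = (Pi.single (t₂ j) 1 : ℝ → ℝ) x :=
      fun x hx => by simp [hx]
    have key := HY_sub_HY_of_eq_off (t₁ := t₁) (M₁ := M₁) ht₂ hj0 hjM
      ((Set.Ici (t₁ i)).indicator 1) hP
    rw [h _ _ _ hP, sub_self, Finset.sum_eq_single_of_mem i hi] at key
    · have hlt : ¬ t₁ i ≤ t₁ (i - 1) :=
        not_le.2 (lt_of_forall_lt_succ ht₁ (by omega) hi'.2)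
      simp [Set.indicator, hlt] at key
      linarith
    · intro l hl hli
      rw [Finset.mem_Icc] at hl
      rcases lt_or_gt_of_ne hli with hlt | hlt
      · have h1 : ¬ t₁ i ≤ t₁ l := not_le.2 (lt_of_forall_lt_succ ht₁ hlt hi'.2)
        have h2 : ¬ t₁ i ≤ t₁ (l - 1) :=
          not_le.2 (lt_of_forall_lt_succ ht₁ (by omega) hi'.2)
        simp [Set.indicator, h1, h2]
      · have h1 : t₁ i ≤ t₁ l := (lt_of_forall_lt_succ ht₁ hlt hl.2).le
        have h2 : t₁ i ≤ t₁ (l - 1) := by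
          rcases (show i ≤ l - 1 by omega).eq_or_lt with h | h
          · rw [← h]
          · exact (lt_of_forall_lt_succ ht₁ h (by omega)).le
        simp [Set.indicator, h1, h2]
  · intro h P₁ P₂ P₂' hP
    rw [← sub_eq_zero, HY_sub_HY_of_eq_off ht₂ hj0 hjM P₁ hP,
      Finset.sum_eq_zero fun i hi => by rw [h i hi, sub_self, mul_zero], mul_zero]

/-- Under complete asynchrony and the boundary overlap conditions, for
`1 < j < M₂ - 1` the point `t₂ j` is nonextant iff no observation time of the
first sequence lies in the open interval `(t₂ (j-1), t₂ (j+1))`, i.e. iff in the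
merged sorted sequence both neighbours of `t₂ j` belong to the second sequence. -/
theorem nonextant_iff_no_first_sequence_point_between
    (M₁ M₂ : ℕ) (hM₁ : 1 ≤ M₁) (hM₂ : 1 ≤ M₂) (t₁ t₂ : ℕ → ℝ)
    (ht₁ : ∀ i < M₁, t₁ i < t₁ (i + 1)) (ht₂ : ∀ j < M₂, t₂ j < t₂ (j + 1))
    (hasync : ∀ i ≤ M₁, ∀ j ≤ M₂, t₁ i ≠ t₂ j)
    (hinit : max (t₁ 0) (t₂ 0) < min (t₁ 1) (t₂ 1))
    (hterm : max (t₁ (M₁ - 1)) (t₂ (M₂ - 1)) < min (t₁ M₁) (t₂ M₂))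
    (j : ℕ) (hj1 : 1 < j) (hj2 : j < M₂ - 1) :
    Nonextant M₁ M₂ t₁ t₂ j ↔
      ∀ k ≤ M₁, t₁ k ∉ Set.Ioo (t₂ (j - 1)) (t₂ (j + 1)) := by
  rw [nonextant_iff_chi_eq ht₁ ht₂ (by omega) (by omega)]
  have hlt : t₂ (j - 1) < t₂ j := lt_of_forall_lt_succ ht₂ (by omega) (by omega)
  have hlt' : t₂ j < t₂ (j + 1) := ht₂ j (by omega)
  simp only [chi_eq_ite, Nat.add_sub_cancel, Set.mem_Ioo, Finset.mem_Icc]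
  constructor
  · rintro h k hk ⟨hk1, hk2⟩
    rcases lt_or_gt_of_ne (hasync k hk j (by omega)) with hkj | hkj
    · have hk0 : k ≠ 0 := by
        rintro rfl
        have h1 : t₁ 0 < t₂ 1 :=
          (le_max_left _ _).trans_lt (hinit.trans_le (min_le_right _ _))
        rcases (show 1 ≤ j - 1 by omega).eq_or_lt with h | h
        · rw [← h] at hk1
          exact lt_asymm h1 hk1
        · exact lt_asymm (h1.trans (lt_of_forall_lt_succ ht₂ h (by omega))) hk1
      have hstep : t₁ (k - 1) < t₁ k := lt_of_forall_lt_succ ht₁ (by omega) hk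
      have := h k ⟨by omega, hk⟩
      rw [if_pos (by simp [*, hstep.trans hkj]), if_neg (by simp [hkj.le])] at this
      exact one_ne_zero this
    · have hkM : k ≠ M₁ := by
        rintro rfl
        have h1 : t₂ (M₂ - 1) < t₁ k :=
          (le_max_right _ _).trans_lt (hterm.trans_le (min_le_left _ _))
        rcases (show j + 1 ≤ M₂ - 1 by omega).eq_or_lt with h | h
        · rw [h] at hk2
          exact lt_asymm h1 hk2
        · exact lt_asymm ((lt_of_forall_lt_succ ht₂ h (by omega)).trans h1) hk2
      have hstep : t₁ k < t₁ (k + 1) := ht₁ k (by omega)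
      have := h (k + 1) ⟨by omega, by omega⟩
      rw [Nat.add_sub_cancel, if_neg (by simp [hkj.le]),
        if_pos (by simp [*, hkj.trans hstep])] at this
      exact zero_ne_one this
  · rintro h i ⟨hi1, hiM⟩
    have hstep : t₁ (i - 1) < t₁ i := lt_of_forall_lt_succ ht₁ (by omega) hiM
    have h1 := h i hiM
    have h2 := h (i - 1) (by omega)
    congr 1
    simp only [max_lt_iff, lt_min_iff, eq_iff_iff]
    grind
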